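/- For every N > 1 and every ρ > 0 there exist a complex Hilbert space X and an N-tuple A = (A₁,…,A_N) of bounded linear operators on X such that A admits a uniform isometric ρ-dilation in the sense of Popescu (A ∈ C^P_{ρ,N}), but A does not admit a unitary ρ-dilation (A ∉ C_{ρ,N}); in particular A does not admit a uniform unitary ρ-dilation, so C^u_{ρ,N} ⊊ C^P_{ρ,N}. -/

import Mathlib

open ContinuousLinearMap

noncomputable section

/-- A continuous linear operator on a complex Hilbert space is unitary. -/
def IsUnitaryOp {Y : Type*} [NormedAddCommGroup Y] [InnerProductSpace ℂ Y] [CompleteSpace Y]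
    (T : Y →L[ℂ] Y) : Prop :=
  T ∘L adjoint T = 1 ∧ adjoint T ∘L T = 1

/-- A unitary `ρ`-dilation of an `N`-tuple of bounded operators on a complex Hilbert space `X`:
a complex Hilbert space `Y`, a linear isometry `ι : X → Y`, and an `N`-tuple `At` of operators
on `Y` such that every unimodular combination `ζ₁At₁ + ⋯ + ζ_N At_N` is unitary, and
`(z₁A₁ + ⋯ + z_N A_N)ⁿ = ρ · ι* ∘ (z₁At₁ + ⋯ + z_N At_N)ⁿ ∘ ι` for all `z ∈ ℂ^N` and `n ≥ 1`. -/
structure UnitaryRhoDilation (N : ℕ) (ρ : ℝ) (X : Type*) [NormedAddCommGroup X]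
    [InnerProductSpace ℂ X] [CompleteSpace X] (A : Fin N → X →L[ℂ] X) where
  Y : Type
  [instN : NormedAddCommGroup Y]
  [instI : InnerProductSpace ℂ Y]
  [instC : CompleteSpace Y]
  ι : X →L[ℂ] Y
  isom : Isometry ι
  At : Fin N → Y →L[ℂ] Y
  unit : ∀ ζ : Fin N → ℂ, (∀ k, ‖ζ k‖ = 1) → IsUnitaryOp (∑ k, ζ k • At k)
  dil : ∀ (z : Fin N → ℂ) (n : ℕ), 1 ≤ n →
    (∑ k, z k • A k) ^ n = (ρ : ℂ) • (adjoint ι ∘L (((∑ k, z k • At k) ^ n) ∘L ι))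

/-- The class `C_{ρ,N}`: `N`-tuples of bounded operators admitting a unitary `ρ`-dilation. -/
def MemC (N : ℕ) (ρ : ℝ) {X : Type*} [NormedAddCommGroup X] [InnerProductSpace ℂ X]
    [CompleteSpace X] (A : Fin N → X →L[ℂ] X) : Prop :=
  Nonempty (UnitaryRhoDilation N ρ X A)

/-- A uniform unitary `ρ`-dilation of an `N`-tuple of bounded operators on a complex Hilbert
space `X`: a complex Hilbert space `Y`, a linear isometry `ι : X → Y`, and an `N`-tuple `At`
of operators on `Y` such that every unimodular combination `ζ₁At₁ + ⋯ + ζ_N At_N` is unitary,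
and for every nonempty word `i₁,…,iₙ` one has
`A_{i₁}⋯A_{iₙ} = ρ · ι* ∘ (At_{i₁}⋯At_{iₙ}) ∘ ι`. -/
structure UniformUnitaryRhoDilation (N : ℕ) (ρ : ℝ) (X : Type*) [NormedAddCommGroup X]
    [InnerProductSpace ℂ X] [CompleteSpace X] (A : Fin N → X →L[ℂ] X) where
  Y : Type
  [instN : NormedAddCommGroup Y]
  [instI : InnerProductSpace ℂ Y]
  [instC : CompleteSpace Y]
  ι : X →L[ℂ] Y
  isom : Isometry ι
  At : Fin N → Y →L[ℂ] Y
  unit : ∀ ζ : Fin N → ℂ, (∀ k, ‖ζ k‖ = 1) → IsUnitaryOp (∑ k, ζ k • At k)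
  dil : ∀ w : List (Fin N), w ≠ [] →
    (w.map A).prod = (ρ : ℂ) • (adjoint ι ∘L ((w.map At).prod ∘L ι))

/-- The class `C^u_{ρ,N}`: `N`-tuples admitting a uniform unitary `ρ`-dilation. -/
def MemCu (N : ℕ) (ρ : ℝ) {X : Type*} [NormedAddCommGroup X] [InnerProductSpace ℂ X]
    [CompleteSpace X] (A : Fin N → X →L[ℂ] X) : Prop :=
  Nonempty (UniformUnitaryRhoDilation N ρ X A)

/-- A uniform isometric `ρ`-dilation in the sense of Popescu: a complex Hilbert space `Y`,
a linear isometry `ι : X → Y`, and operators `V₁,…,V_N` on `Y` with `V_k* V_k = I`,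
`V_k* V_j = 0` for `k ≠ j`, and `A_{i₁}⋯A_{iₙ} = ρ · ι* ∘ (V_{i₁}⋯V_{iₙ}) ∘ ι` for every
nonempty word `i₁,…,iₙ`. -/
structure PopescuRhoDilation (N : ℕ) (ρ : ℝ) (X : Type*) [NormedAddCommGroup X]
    [InnerProductSpace ℂ X] [CompleteSpace X] (A : Fin N → X →L[ℂ] X) where
  Y : Type
  [instN : NormedAddCommGroup Y]
  [instI : InnerProductSpace ℂ Y]
  [instC : CompleteSpace Y]
  ι : X →L[ℂ] Y
  isom : Isometry ι
  V : Fin N → Y →L[ℂ] Y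
  isometric : ∀ k, adjoint (V k) ∘L V k = 1
  orth : ∀ k j, k ≠ j → adjoint (V k) ∘L V j = 0
  dil : ∀ w : List (Fin N), w ≠ [] →
    (w.map A).prod = (ρ : ℂ) • (adjoint ι ∘L ((w.map V).prod ∘L ι))

/-- The Popescu class `C^P_{ρ,N}`: `N`-tuples admitting a uniform isometric `ρ`-dilation. -/
def MemCP (N : ℕ) (ρ : ℝ) {X : Type*} [NormedAddCommGroup X] [InnerProductSpace ℂ X]
    [CompleteSpace X] (A : Fin N → X →L[ℂ] X) : Prop :=
  Nonempty (PopescuRhoDilation N ρ X A)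

/-- A witness for STATEMENT 13: a complex Hilbert space `X` and an `N`-tuple `A` on `X` with
`A ∈ C^P_{ρ,N}` but `A ∉ C_{ρ,N}` (hence also `A ∉ C^u_{ρ,N}`). -/
structure PopescuNotUnitaryWitness (N : ℕ) (ρ : ℝ) where
  X : Type
  [instN : NormedAddCommGroup X]
  [instI : InnerProductSpace ℂ X]
  [instC : CompleteSpace X]
  A : Fin N → X →L[ℂ] X
  memP : MemCP N ρ A
  not_memC : ¬ MemC N ρ A
  not_memCu : ¬ MemCu N ρ A

/-- Standard basis vector of `ℓ²(α)`. -/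
def dlB {α : Type} (a : α) : lp (fun _ : α => ℂ) 2 :=
  letI := Classical.decEq α
  lp.single 2 a (1 : ℂ)

lemma dlB_orth (α : Type) : Orthonormal ℂ (dlB : α → lp (fun _ : α => ℂ) 2) := by
  classical
  rw [orthonormal_iff_ite]
  intro i j
  unfold dlB
  rw [lp.inner_single_left, lp.single_apply, Pi.single_apply]
  split_ifs <;> simp

lemma dlB_ext {α : Type} {E : Type} [NormedAddCommGroup E] [InnerProductSpace ℂ E]
    (S T : lp (fun _ : α => ℂ) 2 →L[ℂ] E) (h : ∀ a, S (dlB a) = T (dlB a)) : S = T := by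
  ext x
  letI := Classical.decEq α
  have hx : HasSum (fun i : α => lp.single 2 i (x i)) x :=
    lp.hasSum_single ENNReal.ofNat_ne_top x
  have key : ∀ i : α, lp.single (E := fun _ : α => ℂ) 2 i (x i) = x i • dlB i := by
    intro i
    unfold dlB
    rw [← lp.single_smul]
    simp
  simp only [key] at hx
  have h1 := hx.mapL S
  have h2 := hx.mapL T
  simp only [map_smul, h] at h1 h2
  exact h1.unique h2

/-- The isometry `ℓ²(α) → ℓ²(β)` induced by an injection. -/
def dlJ {α β : Type} (f : α → β) (hf : Function.Injective f) :
    lp (fun _ : α => ℂ) 2 →ₗᵢ[ℂ] lp (fun _ : β => ℂ) 2 :=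
  (((dlB_orth β).comp f hf).orthogonalFamily).linearIsometry

lemma dlJ_apply {α β : Type} (f : α → β) (hf : Function.Injective f) (a : α) :
    dlJ f hf (dlB a) = dlB (f a) := by
  letI := Classical.decEq α
  have := (((dlB_orth β).comp f hf).orthogonalFamily).linearIsometry_apply_single
    (i := a) (1 : ℂ)
  refine this.trans ?_
  simp

lemma dlB_ext_inner {α : Type} (x y : lp (fun _ : α => ℂ) 2)
    (h : ∀ a, inner ℂ (dlB a) x = inner ℂ (dlB a) y) : x = y := by
  letI := Classical.decEq α
  ext a
  have := h a
  unfold dlB at this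
  simpa [lp.inner_single_left] using this

lemma dlJ_adj {α β : Type} (f : α → β) (hf : Function.Injective f) (a : α) :
    adjoint (dlJ f hf).toContinuousLinearMap (dlB (f a)) = dlB a := by
  classical
  apply dlB_ext_inner
  intro c
  rw [adjoint_inner_right]
  simp only [LinearIsometry.coe_toContinuousLinearMap, dlJ_apply]
  rw [orthonormal_iff_ite.1 (dlB_orth β), orthonormal_iff_ite.1 (dlB_orth α)]
  simp [hf.eq_iff]

lemma dlJ_adj_zero {α β : Type} (f : α → β) (hf : Function.Injective f) (b : β)
    (hb : ∀ a, f a ≠ b) :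
    adjoint (dlJ f hf).toContinuousLinearMap (dlB b) = 0 := by
  classical
  apply dlB_ext_inner
  intro c
  rw [adjoint_inner_right]
  simp only [LinearIsometry.coe_toContinuousLinearMap, dlJ_apply]
  rw [orthonormal_iff_ite.1 (dlB_orth β)]
  simp [hb c]

/-- Words of length at most one. -/
def dlW (N : ℕ) : Option (Fin N) → List (Fin N)
  | none => []
  | some k => [k]

lemma dlW_inj (N : ℕ) : Function.Injective (dlW N) := by
  intro a b h
  cases a <;> cases b <;> simp_all [dlW]

/-- The embedding of the low-degree part into the full Fock space. -/
def dlI (N : ℕ) : lp (fun _ : Option (Fin N) => ℂ) 2 →L[ℂ] lp (fun _ : List (Fin N) => ℂ) 2 :=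
  (dlJ (dlW N) (dlW_inj N)).toContinuousLinearMap

/-- The left creation operators. -/
def dlV (N : ℕ) (k : Fin N) :
    lp (fun _ : List (Fin N) => ℂ) 2 →L[ℂ] lp (fun _ : List (Fin N) => ℂ) 2 :=
  (dlJ (List.cons k) List.cons_injective).toContinuousLinearMap

/-- The compressed, rescaled creation operators. -/
def dlA (N : ℕ) (ρ : ℝ) (k : Fin N) :
    lp (fun _ : Option (Fin N) => ℂ) 2 →L[ℂ] lp (fun _ : Option (Fin N) => ℂ) 2 :=
  (ρ : ℂ) • (adjoint (dlI N) ∘L (dlV N k ∘L dlI N))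

lemma dlI_apply (N : ℕ) (a : Option (Fin N)) : dlI N (dlB a) = dlB (dlW N a) :=
  dlJ_apply (dlW N) (dlW_inj N) a

lemma dlV_apply (N : ℕ) (k : Fin N) (w : List (Fin N)) :
    dlV N k (dlB w) = dlB (k :: w) :=
  dlJ_apply (List.cons k) List.cons_injective w

lemma dlI_adj_long (N : ℕ) (a b : Fin N) (w : List (Fin N)) :
    adjoint (dlI N) (dlB (a :: b :: w)) = 0 := by
  apply dlJ_adj_zero
  intro c
  cases c <;> simp [dlW]

lemma dlI_adj_one (N : ℕ) (a : Fin N) :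
    adjoint (dlI N) (dlB [a]) = dlB (some a) :=
  dlJ_adj (dlW N) (dlW_inj N) (some a)

lemma dlA_none (N : ℕ) (ρ : ℝ) (k : Fin N) : dlA N ρ k (dlB none) = (ρ : ℂ) • dlB (some k) := by
  simp only [dlA, _root_.smul_apply, ContinuousLinearMap.comp_apply, dlI_apply,
    dlV_apply, dlW, dlI_adj_one]

lemma dlA_some (N : ℕ) (ρ : ℝ) (k j : Fin N) : dlA N ρ k (dlB (some j)) = 0 := by
  simp only [dlA, _root_.smul_apply, ContinuousLinearMap.comp_apply, dlI_apply,
    dlV_apply, dlW, dlI_adj_long, smul_zero]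

lemma dlV_word (N : ℕ) (w u : List (Fin N)) :
    (w.map (dlV N)).prod (dlB u) = dlB (w ++ u) := by
  induction w with
  | nil => simp
  | cons a w ih => simp [ih, dlV_apply]

lemma dlA_mul (N : ℕ) (ρ : ℝ) (a b : Fin N) : dlA N ρ a * dlA N ρ b = 0 := by
  apply dlB_ext
  intro c
  cases c <;> simp [dlA_none, dlA_some]

lemma dl_memCP (N : ℕ) (ρ : ℝ) : MemCP N ρ (dlA N ρ) := by
  refine ⟨{ Y := lp (fun _ : List (Fin N) => ℂ) 2, ι := dlI N, isom := ?_, V := dlV N,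
            isometric := ?_, orth := ?_, dil := ?_ }⟩
  · exact (dlJ (dlW N) (dlW_inj N)).isometry
  · intro k
    apply dlB_ext
    intro w
    simp only [ContinuousLinearMap.comp_apply, dlV_apply]
    exact dlJ_adj (List.cons k) List.cons_injective w
  · intro k j hkj
    apply dlB_ext
    intro w
    simp only [ContinuousLinearMap.comp_apply, dlV_apply]
    exact dlJ_adj_zero (List.cons k) List.cons_injective _ (by simp [hkj])
  · intro w hw
    match w, hw with
    | [a], _ => simp [dlA]
    | a :: b :: w, _ =>
      have h0 : ((a :: b :: w).map (dlA N ρ)).prod = 0 := by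
        simp only [List.map_cons, List.prod_cons, ← mul_assoc, dlA_mul, zero_mul]
      rw [h0]
      apply dlB_ext
      intro c
      simp only [_root_.smul_apply, ContinuousLinearMap.comp_apply, dlI_apply,
        dlV_word, List.cons_append, dlI_adj_long]
      simp

lemma dl_not (N : ℕ) (hN : 1 < N) (ρ : ℝ) (hρ : 0 < ρ) {Y : Type} [NormedAddCommGroup Y]
    [InnerProductSpace ℂ Y] [CompleteSpace Y]
    (J : lp (fun _ : Option (Fin N) => ℂ) 2 →L[ℂ] Y) (hJ : Isometry J) (U : Y →L[ℂ] Y)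
    (hU : IsUnitaryOp U)
    (h : ∑ k, dlA N ρ k = (ρ : ℂ) • (adjoint J ∘L (U ∘L J))) : False := by
  have hJn : ∀ x, ‖J x‖ = ‖x‖ := fun x => by
    simpa using hJ.dist_eq x 0
  have hUn : ∀ x, ‖U x‖ = ‖x‖ := by
    intro x
    have h1 : adjoint U (U x) = x := by
      have := congrArg (fun T : Y →L[ℂ] Y => T x) hU.2
      simpa using this
    have h2 : (inner ℂ (U x) (U x) : ℂ) = inner ℂ x x := by
      rw [← adjoint_inner_right, h1]
    rw [inner_self_eq_norm_sq_to_K, inner_self_eq_norm_sq_to_K] at h2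
    have h3 : ‖U x‖ ^ 2 = ‖x‖ ^ 2 := by exact_mod_cast h2
    exact (pow_left_inj₀ (norm_nonneg _) (norm_nonneg _) two_ne_zero).1 h3
  set s : lp (fun _ : Option (Fin N) => ℂ) 2 := ∑ k : Fin N, dlB (some k) with hs
  have hρ' : (ρ : ℂ) ≠ 0 := by exact_mod_cast hρ.ne'
  have hv : s = adjoint J (U (J (dlB none))) := by
    have := congrArg (fun T => T (dlB none)) h
    simp only [_root_.sum_apply, dlA_none, ← Finset.smul_sum,
      _root_.smul_apply, ContinuousLinearMap.comp_apply] at this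
    exact smul_right_injective _ hρ' this
  have hss : (inner ℂ s s : ℂ) = N := by
    have ho := (dlB_orth (Option (Fin N))).comp some (Option.some_injective _)
    have := ho.inner_sum (fun _ => 1) (fun _ => 1) Finset.univ
    simpa [hs] using this
  have hn : ‖s‖ ^ 2 = N := by
    rw [inner_self_eq_norm_sq_to_K] at hss
    have h4 : ((‖s‖ ^ 2 : ℝ) : ℂ) = ((N : ℝ) : ℂ) := by
      rw [Complex.ofReal_pow]
      exact hss
    exact Complex.ofReal_injective h4
  have hle : ‖s‖ ^ 2 ≤ ‖s‖ := by
    have h1 : ‖(inner ℂ s s : ℂ)‖ ≤ ‖s‖ := by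
      conv_lhs => rw [show (inner ℂ s s : ℂ) = inner ℂ s (adjoint J (U (J (dlB none)))) by
        rw [← hv]]
      rw [adjoint_inner_right]
      refine (norm_inner_le_norm _ _).trans ?_
      rw [hUn, hJn, hJn, (dlB_orth _).1]
      simp
    rw [inner_self_eq_norm_sq_to_K] at h1
    simpa using h1
  have hN' : (2 : ℝ) ≤ N := by exact_mod_cast hN
  nlinarith [norm_nonneg s]

lemma dl_not_memC (N : ℕ) (hN : 1 < N) (ρ : ℝ) (hρ : 0 < ρ) : ¬ MemC N ρ (dlA N ρ) := by
  rintro ⟨D⟩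
  letI := D.instN
  letI := D.instI
  letI := D.instC
  refine dl_not N hN ρ hρ D.ι D.isom _ (D.unit (fun _ => 1) (by simp)) ?_
  simpa using D.dil (fun _ => 1) 1 le_rfl

lemma dl_not_memCu (N : ℕ) (hN : 1 < N) (ρ : ℝ) (hρ : 0 < ρ) : ¬ MemCu N ρ (dlA N ρ) := by
  rintro ⟨D⟩
  letI := D.instN
  letI := D.instI
  letI := D.instC
  refine dl_not N hN ρ hρ D.ι D.isom _ (D.unit (fun _ => 1) (by simp)) ?_
  have h : ∀ k, dlA N ρ k = (ρ : ℂ) • (adjoint D.ι ∘L (D.At k ∘L D.ι)) := by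
    intro k
    simpa using D.dil [k] (by simp)
  ext1 x
  simp only [h, one_smul, _root_.sum_apply, _root_.smul_apply,
    ContinuousLinearMap.comp_apply, map_sum, Finset.smul_sum]

/-- for every `N > 1` and `ρ > 0` there exist a complex Hilbert space `X` and an
`N`-tuple `A` on `X` with `A ∈ C^P_{ρ,N}` but `A ∉ C_{ρ,N}`; in particular `A ∉ C^u_{ρ,N}`,
so `C^u_{ρ,N} ⊊ C^P_{ρ,N}`. -/
theorem exists_memCP_not_memC (N : ℕ) (hN : 1 < N) (ρ : ℝ) (hρ : 0 < ρ) :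
    Nonempty (PopescuNotUnitaryWitness N ρ) := by
  exact ⟨{ X := lp (fun _ : Option (Fin N) => ℂ) 2, A := dlA N ρ, memP := dl_memCP N ρ,
            not_memC := dl_not_memC N hN ρ hρ, not_memCu := dl_not_memCu N hN ρ hρ }⟩
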